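/- For every real γ with 0 < γ < 1, the two forms of the two-loop contribution to the Dyson–Schwinger equation agree: 4 · Σ_{n=1}^{∞} n · ζ(2n+1) · (1 − 4^{−n}) · [ γ^{2n−2} + (1−γ)^{2n−2} ] = −(1/γ)[ψ′(1+γ) − ψ′(1−γ)] − (1/(1−γ))[ψ′(2−γ) − ψ′(γ)] + (1/(2γ))[ψ′(1+γ/2) − ψ′(1−γ/2)] + (1/(2(1−γ)))[ψ′((3−γ)/2) − ψ′((1+γ)/2)]. -/

import Mathlib

/-- The Riemann zeta value `ζ(s) = ∑_{k=1}^∞ k^(−s)` for a natural exponent `s`. -/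
noncomputable def zetaR (s : ℕ) : ℝ := ∑' k : ℕ, 1 / ((k : ℝ) + 1) ^ s

/-- The trigamma function `ψ′(z) = ∑_{m=0}^∞ 1/(m+z)²`. -/
noncomputable def trigamma (z : ℝ) : ℝ := ∑' m : ℕ, 1 / ((m : ℝ) + z) ^ 2

lemma aux_cast {f g : ℕ → ℝ} {a b : ℝ} (h : HasSum f a) (hfg : ∀ n, g n = f n) (hab : b = a) :
    HasSum g b := by
  obtain rfl : g = f := funext hfg
  rw [hab]; exact h

lemma aux_geom (r : ℝ) (h0 : 0 ≤ r) (h1 : r < 1) :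
    HasSum (fun n : ℕ => ((n : ℝ) + 1) * r ^ n) (1 / (1 - r) ^ 2) := by
  have h := hasSum_choose_mul_geometric_of_norm_lt_one (𝕜 := ℝ) 1 (r := r)
    (by rw [Real.norm_eq_abs, abs_of_nonneg h0]; exact h1)
  simpa using h

lemma aux_tri (z : ℝ) (hz : 0 < z) :
    HasSum (fun m : ℕ => 1 / ((m : ℝ) + z) ^ 2) (trigamma z) := by
  refine Summable.hasSum ?_
  have h := (Real.summable_one_div_nat_add_rpow z 2).2 (by norm_num)
  refine h.congr fun m => ?_
  have : (0 : ℝ) < m + z := by positivity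
  rw [abs_of_pos this]
  norm_num

lemma aux_zeta (n : ℕ) :
    HasSum (fun k : ℕ => 1 / ((k : ℝ) + 1) ^ (2 * n + 3)) (zetaR (2 * n + 3)) := by
  refine Summable.hasSum ?_
  have h := (summable_nat_add_iff 1).2
    ((Real.summable_one_div_nat_pow (p := 2 * n + 3)).2 (by omega))
  simpa using h

lemma aux_main (x : ℝ) (h0 : 0 < x) (h1 : x < 1) :
    HasSum (fun n : ℕ => ((n : ℝ) + 1) * zetaR (2 * n + 3) * x ^ (2 * n))
      (-(1 / (4 * x)) * (trigamma (1 + x) - trigamma (1 - x))) := by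
  set f : ℕ × ℕ → ℝ := fun p => ((p.2 : ℝ) + 1) * x ^ (2 * p.2) / ((p.1 : ℝ) + 1) ^ (2 * p.2 + 3)
    with hf
  have hk : ∀ k : ℕ, HasSum (fun n : ℕ => f (k, n))
      (-(1 / (4 * x)) * (1 / ((k : ℝ) + (1 + x)) ^ 2 - 1 / ((k : ℝ) + (1 - x)) ^ 2)) := by
    intro k
    have hk0 : (0 : ℝ) ≤ k := Nat.cast_nonneg k
    have hK : (0 : ℝ) < (k : ℝ) + 1 := by positivity
    have hr : x / ((k : ℝ) + 1) < 1 := by rw [div_lt_one hK]; linarith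
    have hr0 : 0 ≤ x / ((k : ℝ) + 1) := by positivity
    have h := (aux_geom ((x / ((k : ℝ) + 1)) ^ 2) (by positivity)
      (by nlinarith)).mul_left (1 / ((k : ℝ) + 1) ^ 3)
    refine aux_cast h ?_ ?_
    · intro n
      simp only [hf]
      rw [← pow_mul, div_pow, pow_add]
      field_simp
    · have a1 : (k : ℝ) + (1 + x) ≠ 0 := by positivity
      have a2 : (k : ℝ) + (1 - x) ≠ 0 := by
        have : 0 < (k : ℝ) + (1 - x) := by linarith
        exact this.ne'
      have a3 : 1 - (x / ((k : ℝ) + 1)) ^ 2 =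
          ((k : ℝ) + (1 + x)) * ((k : ℝ) + (1 - x)) / ((k : ℝ) + 1) ^ 2 := by
        field_simp
        ring
      rw [a3]
      field_simp
      ring
  have hsum := ((aux_tri (1 + x) (by linarith)).sub (aux_tri (1 - x) (by linarith))).mul_left
    (-(1 / (4 * x)))
  have hfs : Summable f := by
    refine (summable_prod_of_nonneg ?_).2 ⟨fun k => (hk k).summable, ?_⟩
    · intro p
      simp only [hf, Pi.zero_apply]
      positivity
    · refine hsum.summable.congr fun k => ?_
      exact (hk k).tsum_eq.symm
  have e1 := (hfs.hasSum.prod_fiberwise hk).unique hsum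
  have hs := hfs.hasSum
  rw [e1] at hs
  refine ((Equiv.prodComm ℕ ℕ).hasSum_iff.2 hs).prod_fiberwise fun n => ?_
  have h := (aux_zeta n).mul_left (((n : ℝ) + 1) * x ^ (2 * n))
  refine aux_cast h ?_ ?_
  · intro k
    simp [hf, div_eq_mul_inv]
  · ring

lemma aux_two (x : ℝ) (h0 : 0 < x) (h1 : x < 1) :
    HasSum (fun n : ℕ => ((n : ℝ) + 1) * zetaR (2 * n + 3) *
        (1 - 1 / (4 : ℝ) ^ (n + 1)) * x ^ (2 * n))
      (-(1 / (4 * x)) * (trigamma (1 + x) - trigamma (1 - x)) +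
        1 / (8 * x) * (trigamma (1 + x / 2) - trigamma (1 - x / 2))) := by
  have h := (aux_main x h0 h1).sub
    ((aux_main (x / 2) (by linarith) (by linarith)).mul_left (1 / 4))
  refine aux_cast h ?_ ?_
  · intro n
    have : (x / 2) ^ (2 * n) = x ^ (2 * n) / 4 ^ n := by
      rw [div_pow, pow_mul 2]; norm_num
    rw [this, pow_succ]
    field_simp
  · field_simp
    ring

/-- **Agreement of the two forms of the two-loop contribution to the DSE.**
For `0 < γ < 1`,
`4 ∑_{n≥1} n ζ(2n+1)(1−4^(−n)) [γ^(2n−2) + (1−γ)^(2n−2)]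
 = −(1/γ)[ψ′(1+γ)−ψ′(1−γ)] − (1/(1−γ))[ψ′(2−γ)−ψ′(γ)]
   + (1/(2γ))[ψ′(1+γ/2)−ψ′(1−γ/2)] + (1/(2(1−γ)))[ψ′((3−γ)/2)−ψ′((1+γ)/2)]`.
(The sum over `n ≥ 1` is indexed by `n+1` for `n : ℕ`.) -/
theorem two_loop_DSE_series_eq_trigamma (γ : ℝ) (hγ₀ : 0 < γ) (hγ₁ : γ < 1) :
    4 * ∑' n : ℕ, ((n : ℝ) + 1) * zetaR (2 * n + 3) *
        (1 - 1 / (4 : ℝ) ^ (n + 1)) * (γ ^ (2 * n) + (1 - γ) ^ (2 * n)) =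
      -(1 / γ) * (trigamma (1 + γ) - trigamma (1 - γ)) -
        (1 / (1 - γ)) * (trigamma (2 - γ) - trigamma γ) +
        (1 / (2 * γ)) * (trigamma (1 + γ / 2) - trigamma (1 - γ / 2)) +
        (1 / (2 * (1 - γ))) *
          (trigamma ((3 - γ) / 2) - trigamma ((1 + γ) / 2)) := by
  have h := ((aux_two γ hγ₀ hγ₁).add (aux_two (1 - γ) (by linarith) (by linarith))).mul_left 4
  have e1 : 1 + (1 - γ) = 2 - γ := by ring
  have e2 : 1 - (1 - γ) = γ := by ring
  have e3 : 1 + (1 - γ) / 2 = (3 - γ) / 2 := by ring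
  have e4 : 1 - (1 - γ) / 2 = (1 + γ) / 2 := by ring
  rw [e1, e2, e3, e4] at h
  have h' := h.tsum_eq
  rw [tsum_mul_left] at h'
  simp only [← mul_add] at h'
  rw [h']
  have : 1 - γ ≠ 0 := (sub_pos.2 hγ₁).ne'
  field_simp
  ring
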